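/- Logarithmic blow-up of the normal derivative for a harmonic function dominating a half-plane profile: let 0 < δ < 1/2 and let w : closure(B₁(0)) → [0,∞) be continuous on the closed unit ball of ℝ², harmonic in B₁(0), with w(x) ≥ max(⟨x, e₂⟩, 0) for all x ∈ B₁(0) and w = 0 on ∂B₁(0) ∩ {x : ⟨x, e₂⟩ < 0}. Then there is an absolute constant C > 0 such that for every x₀ ∈ ∂B₁(0) with −δ < ⟨x₀, e₂⟩ < 0, the inward radial derivative satisfies liminf_{s→0⁺} w((1−s)x₀)/s ≥ C · ln(1/δ). -/

import Mathlib

open Metric MeasureTheory Filter Set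

noncomputable section

/-- The plane `ℝ²`. -/
abbrev E2 := EuclideanSpace ℝ (Fin 2)

/-- Harmonicity via the mean-value property on balls. -/
def HarmonicOn2 (v : E2 → ℝ) (s : Set E2) : Prop :=
  ContinuousOn v s ∧ ∀ x r, 0 < r → closedBall x r ⊆ s → v x = ⨍ y in ball x r, v y

/-!
Let `P` be the holomorphic function on the disc whose real part has boundary values
`max (im z) 0`; in closed form, `P z = -i z / 2 + (1 - z²) / (2 π z) * log ((1 + z) / (1 - z))`.
The minimum principle gives `Re P ≤ w` on the closed disc, and both sides vanish at a point
`z = x + i y` of the lower arc. Hence the inward difference quotients of `w` at `z` dominate those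
of `Re P`, whose limit `(x artanh x - 1) / π - y / 2` grows like `(1 / π) log (1 / |y|)` as `y → 0`.
-/

open scoped ComplexConjugate Real Topology RealInnerProductSpace

/-- The mean value property of `u` over all balls whose closures lie in `U`: harmonicity in the
form needed for the minimum principle. Means are taken with respect to `volume`, and no regularity
of `u` is built in. -/
def HasBallMeans {X : Type*} [PseudoMetricSpace X] [MeasureSpace X] (u : X → ℝ) (U : Set X) :
    Prop :=
  ∀ c r, 0 < r → closedBall c r ⊆ U → u c = ⨍ y in ball c r, u y

section MetricSpace

variable {X : Type*} [MetricSpace X] [ProperSpace X] [MeasureSpace X] [BorelSpace X]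
  [IsFiniteMeasureOnCompacts (volume : Measure X)] {u v : X → ℝ} {U : Set X}

theorem integrableOn_ball_of_continuousOn {c : X} {r : ℝ} (hu : ContinuousOn u (closedBall c r)) :
    IntegrableOn u (ball c r) :=
  (hu.integrableOn_compact (isCompact_closedBall c r)).mono_set ball_subset_closedBall

namespace HasBallMeans

theorem sub (hu : HasBallMeans u U) (hv : HasBallMeans v U) (huc : ContinuousOn u U)
    (hvc : ContinuousOn v U) : HasBallMeans (fun x ↦ u x - v x) U := by
  intro c r hr hcr
  simp only [hu c r hr hcr, hv c r hr hcr, setAverage_eq]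
  rw [integral_sub (integrableOn_ball_of_continuousOn (huc.mono hcr))
    (integrableOn_ball_of_continuousOn (hvc.mono hcr)), smul_sub]

variable [(volume : Measure X).IsOpenPosMeasure]

theorem eventuallyEq_of_isMinOn (hu : HasBallMeans u U) (hc : ContinuousOn u U) (hU : IsOpen U)
    {p : X} (hp : p ∈ U) (hmin : IsMinOn u U p) : u =ᶠ[𝓝 p] fun _ ↦ u p := by
  obtain ⟨r, hr, hpr⟩ := nhds_basis_closedBall.mem_iff.1 (hU.mem_nhds hp)
  have hball : ball p r ⊆ U := ball_subset_closedBall.trans hpr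
  have hint : IntegrableOn u (ball p r) := integrableOn_ball_of_continuousOn (hc.mono hpr)
  have hfin : volume (ball p r) ≠ ⊤ := measure_ball_lt_top.ne
  have hzero : ∫ y in ball p r, (u y - u p) = 0 := by
    have h := setAverage_sub_setAverage hfin u
    rwa [← hu p r hr hpr] at h
  have hnonneg : 0 ≤ᵐ[volume.restrict (ball p r)] fun y ↦ u y - u p :=
    ae_restrict_of_forall_mem measurableSet_ball fun y hy ↦ sub_nonneg.2 (hmin (hball hy))
  rw [setIntegral_eq_zero_iff_of_nonneg_ae hnonneg (hint.sub (integrableOn_const hfin))] at hzero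
  have heq : EqOn (fun y ↦ u y - u p) 0 (ball p r) := Measure.eqOn_open_of_ae_eq hzero isOpen_ball
    ((hc.mono hball).sub continuousOn_const) continuousOn_const
  filter_upwards [ball_mem_nhds p hr] with y hy
  exact sub_eq_zero.1 (heq hy)

theorem nonneg_of_nonneg_frontier [PreconnectedSpace X] [NoncompactSpace X]
    (hu : HasBallMeans u U) (hc : ContinuousOn u (closure U)) (hU : IsOpen U)
    (hbdd : Bornology.IsBounded U) (hfr : ∀ x ∈ frontier U, 0 ≤ u x) :
    ∀ x ∈ closure U, 0 ≤ u x := by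
  by_contra! ⟨q, hq, hq0⟩
  have hcpt : IsCompact (closure U) := hbdd.isCompact_closure
  obtain ⟨p, hp, hmin⟩ := hcpt.exists_isMinOn ⟨q, hq⟩ hc
  have hneg : u p < 0 := (hmin hq).trans_lt hq0
  -- The set of minimisers is compact and, by the mean value property, open.
  set S : Set X := closure U ∩ u ⁻¹' {u p}
  have hSc : IsClosed S := hc.preimage_isClosed_of_isClosed isClosed_closure isClosed_singleton
  have hSU : S ⊆ U := fun y ⟨hy, hyp⟩ ↦ by_contra fun hyU ↦
    (hfr y ⟨hy, fun h ↦ hyU (interior_subset h)⟩).not_gt (by rwa [show u y = u p from hyp])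
  have hSo : IsOpen S := isOpen_iff_mem_nhds.2 fun y hy ↦ by
    have hymin : IsMinOn u U y := fun x hx ↦
      (show u y = u p from hy.2).trans_le (hmin (subset_closure hx))
    filter_upwards [hu.eventuallyEq_of_isMinOn (hc.mono subset_closure) hU (hSU hy) hymin,
      hU.mem_nhds (hSU hy)] with x hxy hxU
    exact ⟨subset_closure hxU, hxy.trans hy.2⟩
  have huniv : S = univ := IsClopen.eq_univ ⟨hSc, hSo⟩ ⟨p, hp, rfl⟩
  exact noncompact_univ X (huniv ▸ hcpt.of_isClosed_subset hSc inter_subset_left)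

end HasBallMeans

end MetricSpace

section NormedSpace

namespace HasBallMeans

variable {E F : Type*} [NormedAddCommGroup E] [NormedAddCommGroup F]

theorem le_of_le_sphere [NormedSpace ℝ E] [ProperSpace E] [Nontrivial E] [MeasureSpace E]
    [BorelSpace E] [IsFiniteMeasureOnCompacts (volume : Measure E)]
    [(volume : Measure E).IsOpenPosMeasure] {u v : E → ℝ} {c : E} {R : ℝ}
    (hu : HasBallMeans u (ball c R)) (hv : HasBallMeans v (ball c R))
    (huc : ContinuousOn u (closedBall c R)) (hvc : ContinuousOn v (closedBall c R)) (hR : R ≠ 0)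
    (hle : ∀ x ∈ sphere c R, u x ≤ v x) : ∀ x ∈ closedBall c R, u x ≤ v x := by
  intro x hx
  refine sub_nonneg.1 ((hv.sub hu (hvc.mono ball_subset_closedBall)
    (huc.mono ball_subset_closedBall)).nonneg_of_nonneg_frontier ?_ isOpen_ball isBounded_ball
    ?_ x ?_)
  · rw [closure_ball c hR]
    exact hvc.sub huc
  · simpa only [frontier_ball c hR, sub_nonneg] using hle
  · rwa [closure_ball c hR]

theorem comp_linearIsometryEquiv [InnerProductSpace ℝ E] [FiniteDimensional ℝ E]
    [MeasurableSpace E] [BorelSpace E] [InnerProductSpace ℝ F] [FiniteDimensional ℝ F]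
    [MeasurableSpace F] [BorelSpace F] {u : F → ℝ} {U : Set F} (hu : HasBallMeans u U)
    (e : E ≃ₗᵢ[ℝ] F) :
    HasBallMeans (u ∘ e) (e ⁻¹' U) := by
  intro c r hr hcr
  have hemb : MeasurableEmbedding e := e.toHomeomorph.measurableEmbedding
  have hvol : volume (ball c r) = volume (ball (e c) r) := by
    rw [← e.measurePreserving.measure_preimage_emb hemb, e.preimage_ball, e.symm_apply_apply]
  have hint := e.measurePreserving.setIntegral_preimage_emb hemb u (ball (e c) r)
  rw [e.preimage_ball, e.symm_apply_apply] at hint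
  have hsub : closedBall (e c) r ⊆ U := by
    rwa [← e.image_closedBall, image_subset_iff]
  simp only [Function.comp_apply, hu (e c) r hr hsub, setAverage_eq, hint, Measure.real, hvol]

end HasBallMeans

end NormedSpace

section CircleAverage

open Real

variable {E : Type*} [NormedAddCommGroup E] [NormedSpace ℝ E]

theorem add_polarCoord_symm_eq_circleMap (c : ℂ) (r θ : ℝ) :
    c + Complex.polarCoord.symm (r, θ) = circleMap c r θ := by
  rw [Complex.polarCoord_symm_apply, circleMap, Complex.exp_mul_I, Complex.ofReal_cos,
    Complex.ofReal_sin]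

theorem setIntegral_circleMap_eq_smul_circleAverage (f : ℂ → E) (c : ℂ) (r : ℝ) :
    ∫ θ in Ioo (-π) π, f (circleMap c r θ) = (2 * π) • circleAverage f c r := by
  rw [circleAverage_eq_integral_add (-π), smul_inv_smul₀ (by positivity),
    intervalIntegral.integral_comp_add_right (fun θ ↦ f (circleMap c r θ)),
    intervalIntegral.integral_of_le (by linarith [pi_pos]), integral_Ioc_eq_integral_Ioo]
  ring_nf

theorem setIntegral_ball_eq_setIntegral_circleAverage {f : ℂ → E} {c : ℂ} {R : ℝ}
    (hf : ContinuousOn f (closedBall c R)) :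
    ∫ z in ball c R, f z = ∫ r in Ioo 0 R, (2 * π * r) • circleAverage f c r := by
  have hmem {r : ℝ} (hr : 0 ≤ r) (θ : ℝ) : circleMap c r θ ∈ ball c R ↔ r < R := by
    simp [circleMap, dist_eq_norm, abs_of_nonneg hr]
  have hint : IntegrableOn (fun p : ℝ × ℝ ↦ p.1 • f (circleMap c p.1 p.2))
      (Ioo 0 R ×ˢ Ioo (-π) π) := by
    refine IntegrableOn.mono_set (t := Icc 0 R ×ˢ Icc (-π) π) ?_
      (prod_mono Ioo_subset_Icc_self Ioo_subset_Icc_self)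
    refine ContinuousOn.integrableOn_compact (isCompact_Icc.prod isCompact_Icc) ?_
    refine continuousOn_fst.smul (hf.comp (f := fun p : ℝ × ℝ ↦ circleMap c p.1 p.2)
      (by unfold circleMap; fun_prop) fun p hp ↦ ?_)
    exact sphere_subset_closedBall.trans (closedBall_subset_closedBall hp.1.2)
      (circleMap_mem_sphere c hp.1.1 p.2)
  calc ∫ z in ball c R, f z
      = ∫ z, (ball c R).indicator f (c + z) := by
        rw [integral_add_left_eq_self, integral_indicator measurableSet_ball]
    _ = ∫ p in Ioi 0 ×ˢ Ioo (-π) π, p.1 • (ball c R).indicator f (circleMap c p.1 p.2) := by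
        rw [← Complex.integral_comp_polarCoord_symm fun z ↦ (ball c R).indicator f (c + z),
          polarCoord_target]
        simp only [← add_polarCoord_symm_eq_circleMap, Prod.mk.eta]
    _ = ∫ p in Ioo 0 R ×ˢ Ioo (-π) π, p.1 • f (circleMap c p.1 p.2) := by
        rw [setIntegral_eq_of_subset_of_forall_sdiff_eq_zero
          (measurableSet_Ioi.prod measurableSet_Ioo) (prod_mono_left Ioo_subset_Ioi_self)]
        · refine setIntegral_congr_fun (measurableSet_Ioo.prod measurableSet_Ioo) fun p hp ↦ ?_
          simp only [indicator_of_mem ((hmem hp.1.1.le _).2 hp.1.2)]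
        · rintro p ⟨hp, hpR⟩
          rw [indicator_of_notMem fun h ↦ hpR ⟨⟨hp.1, (hmem hp.1.le _).1 h⟩, hp.2⟩, smul_zero]
    _ = ∫ r in Ioo 0 R, ∫ θ in Ioo (-π) π, r • f (circleMap c r θ) := setIntegral_prod _ hint
    _ = ∫ r in Ioo 0 R, (2 * π * r) • circleAverage f c r := by
        simp only [integral_smul, setIntegral_circleMap_eq_smul_circleAverage, smul_smul,
          mul_comm]

theorem hasBallMeans_of_harmonicOnNhd {u : ℂ → ℝ} {U : Set ℂ}
    (hu : InnerProductSpace.HarmonicOnNhd u U) : HasBallMeans u U := by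
  intro c R hR hcR
  have hvol : volume.real (ball c R) = π * R ^ 2 := by
    simp [Measure.real, hR.le, mul_comm]
  have hmean : ∀ r ∈ Ioo 0 R, (2 * π * r) • circleAverage u c r = (2 * π * u c) * r :=
      fun r hr ↦ by
    have hsub : closedBall c |r| ⊆ U := by
      rw [abs_of_pos hr.1]
      exact (closedBall_subset_closedBall hr.2.le).trans hcR
    rw [(hu.mono hsub).circleAverage_eq, smul_eq_mul]
    ring
  rw [setAverage_eq, setIntegral_ball_eq_setIntegral_circleAverage (hu.mono hcR).continuousOn,
    setIntegral_congr_fun measurableSet_Ioo hmean, ← integral_Ioc_eq_integral_Ioo,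
    ← intervalIntegral.integral_of_le hR.le, intervalIntegral.integral_const_mul, integral_id, hvol,
    smul_eq_mul]
  field_simp
  ring

theorem hasBallMeans_re_of_differentiableOn {f : ℂ → ℂ} {U : Set ℂ}
    (hf : DifferentiableOn ℂ f U) (hU : IsOpen U) : HasBallMeans (fun z ↦ (f z).re) U :=
  hasBallMeans_of_harmonicOnNhd fun _ hz ↦ (hf.analyticAt (hU.mem_nhds hz)).harmonicAt_re

end CircleAverage

theorem HasBallMeans.exists_le_mul_one_sub_inner {u : ℂ → ℝ} (hu : HasBallMeans u (ball 0 1))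
    (hc : ContinuousOn u (closedBall 0 1)) {z : ℂ} (hz : ‖z‖ = 1)
    (hnear : ∀ᶠ y in 𝓝[sphere 0 1] z, u y ≤ 0) :
    ∃ K, ∀ y ∈ closedBall (0 : ℂ) 1, u y ≤ K * (1 - ⟪z, y⟫) := by
  obtain ⟨M, hM⟩ := (isCompact_closedBall (0 : ℂ) 1).exists_bound_of_continuousOn hc
  obtain ⟨ε, hε, hnear⟩ := mem_nhdsWithin_iff.1 hnear
  have hM0 : 0 ≤ M := (norm_nonneg _).trans (hM 0 (by simp))
  set K := 2 * M / ε ^ 2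
  have hbarrier : DifferentiableOn ℂ (fun y : ℂ ↦ K * (1 - y * conj z)) univ := by fun_prop
  have hre (y : ℂ) : (K * (1 - y * conj z)).re = K * (1 - ⟪z, y⟫) := by
    rw [Complex.inner, Complex.re_ofReal_mul, Complex.sub_re, Complex.one_re]
  have hmeans := hasBallMeans_re_of_differentiableOn hbarrier isOpen_univ
  simp only [hre] at hmeans
  refine ⟨K, hu.le_of_le_sphere (fun c r hr _ ↦ hmeans c r hr (subset_univ _)) hc (by fun_prop)
    one_ne_zero fun y hy ↦ ?_⟩
  have hy1 : ‖y‖ = 1 := mem_sphere_zero_iff_norm.1 hy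
  have hdist : 1 - ⟪z, y⟫ = dist y z ^ 2 / 2 := by
    rw [dist_eq_norm, norm_sub_sq_real, hz, hy1, real_inner_comm]
    ring
  rw [hdist]
  rcases lt_or_ge (dist y z) ε with hyz | hyz
  · exact (hnear ⟨hyz, hy⟩).trans (by positivity)
  · calc u y ≤ M := (le_abs_self _).trans (hM y (sphere_subset_closedBall hy))
      _ = K * (ε ^ 2 / 2) := by simp only [K]; field_simp
      _ ≤ K * (dist y z ^ 2 / 2) := by gcongr

section ProfilePotential

open Complex

/-- A branch of `log ((1 + z) / (1 - z))`, holomorphic on the unit disc; on the unit circle its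
imaginary part is `±π / 2`, with the sign of `z.im`. -/
def logCayley (z : ℂ) : ℂ := log (1 + z) - log (1 - z)

theorem re_pos_of_norm_sub_one_le {w : ℂ} (hw : ‖w - 1‖ ≤ 1) (h0 : w ≠ 0) : 0 < w.re := by
  have hsq : ‖w - 1‖ ^ 2 = ‖w‖ ^ 2 - 2 * w.re + 1 := by
    rw [norm_sub_sq_real, norm_one, Complex.inner, one_mul, conj_re, one_pow]
  have := norm_pos_iff.2 h0
  nlinarith [norm_nonneg (w - 1)]

theorem mul_conj_eq_one_of_norm_eq_one {z : ℂ} (hz : ‖z‖ = 1) : z * conj z = 1 := by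
  rw [mul_conj', hz, ofReal_one, one_pow]

theorem hasDerivAt_logCayley {z : ℂ} (h₁ : 1 + z ∈ slitPlane) (h₂ : 1 - z ∈ slitPlane) :
    HasDerivAt logCayley (2 / (1 - z ^ 2)) z := by
  have hadd := ((hasDerivAt_id z).const_add 1).clog h₁
  have hsub := ((hasDerivAt_id z).const_sub 1).clog h₂
  refine (hadd.sub hsub).congr_deriv ?_
  have hadd0 := slitPlane_ne_zero h₁
  have hsub0 := slitPlane_ne_zero h₂
  have hfactor : 1 - z ^ 2 = (1 + z) * (1 - z) := by ring
  simp only [id_eq, hfactor]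
  field_simp
  ring

theorem re_logCayley_of_norm_eq_one {z : ℂ} (hz : ‖z‖ = 1) (him : z.im ≠ 0) :
    (logCayley z).re = Real.artanh z.re := by
  have hadd : ‖1 + z‖ ^ 2 = 2 * (1 + z.re) := by
    rw [norm_add_sq_real, hz, norm_one, Complex.inner, map_one, mul_one]
    ring
  have hsub : ‖1 - z‖ ^ 2 = 2 * (1 - z.re) := by
    rw [norm_sub_sq_real, hz, norm_one, Complex.inner, map_one, mul_one]
    ring
  have hratio : (1 + z.re) / (1 - z.re) = (‖1 + z‖ / ‖1 - z‖) ^ 2 := by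
    rw [div_pow, hadd, hsub, mul_div_mul_left _ _ two_ne_zero]
  have hadd0 : 1 + z ≠ 0 := slitPlane_ne_zero (Or.inr (by simpa))
  have hsub0 : 1 - z ≠ 0 := slitPlane_ne_zero (Or.inr (by simpa))
  rw [logCayley, sub_re, log_re, log_re, Real.artanh, hratio, Real.sqrt_sq (by positivity),
    Real.log_div (norm_ne_zero_iff.2 hadd0) (norm_ne_zero_iff.2 hsub0)]

-- `(1 + z) / (1 - z)` is a positive multiple of `(1 + z) * conj (1 - z) = 2 * z.im * I`.
theorem im_logCayley_of_norm_eq_one {z : ℂ} (hz : ‖z‖ = 1) (him : z.im ≠ 0) :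
    (logCayley z).im = (z.im * I).arg := by
  have hadd0 : 1 + z ≠ 0 := slitPlane_ne_zero (Or.inr (by simpa))
  have hsub0 : 1 - z ≠ 0 := slitPlane_ne_zero (Or.inr (by simpa))
  have hadd := abs_lt.1 (abs_arg_lt_pi_div_two_iff.2
    (Or.inl (re_pos_of_norm_sub_one_le (by simp [hz]) hadd0)))
  have hsub := abs_lt.1 (abs_arg_lt_pi_div_two_iff.2
    (Or.inl (re_pos_of_norm_sub_one_le (by simp [hz]) hsub0)))
  have hconj : (conj (1 - z)).arg = -(1 - z).arg := by
    rw [arg_conj, if_neg (by linarith [Real.pi_pos])]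
  have hprod : (1 + z) * conj (1 - z) = (2 : ℝ) * (z.im * I) := by
    have hsub_conj : z - conj z = (2 * z.im : ℝ) * I := sub_conj z
    rw [map_sub, map_one]
    push_cast at hsub_conj ⊢
    linear_combination hsub_conj - mul_conj_eq_one_of_norm_eq_one hz
  rw [logCayley, sub_im, log_im, log_im, sub_eq_add_neg, ← hconj, ← arg_mul hadd0, hprod,
    arg_real_mul _ two_pos]
  · exact (map_ne_zero _).2 hsub0
  · rw [hconj]
    constructor <;> linarith

theorem im_mul_im_logCayley_of_norm_eq_one {z : ℂ} (hz : ‖z‖ = 1) :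
    z.im * (logCayley z).im = |z.im| * (π / 2) := by
  rcases lt_trichotomy z.im 0 with him | him | him
  · rw [im_logCayley_of_norm_eq_one hz him.ne, arg_eq_neg_pi_div_two_iff.2 (by simpa using him),
      abs_of_neg him]
    ring
  · simp only [him, zero_mul, abs_zero]
  · rw [im_logCayley_of_norm_eq_one hz him.ne', arg_eq_pi_div_two_iff.2 (by simpa using him),
      abs_of_pos him]

theorem one_sub_sq_eq_of_norm_eq_one {z : ℂ} (hz : ‖z‖ = 1) : 1 - z ^ 2 = -2 * I * z.im * z := by
  have him : z - conj z = (2 * z.im : ℝ) * I := sub_conj z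
  push_cast at him
  linear_combination -mul_conj_eq_one_of_norm_eq_one hz - z * him

theorem one_add_sq_eq_of_norm_eq_one {z : ℂ} (hz : ‖z‖ = 1) : 1 + z ^ 2 = 2 * z.re * z := by
  have hre : z + conj z = (2 * z.re : ℝ) := add_conj z
  push_cast at hre
  linear_combination z * hre - mul_conj_eq_one_of_norm_eq_one hz

/-- The holomorphic function on the unit disc whose real part is the harmonic extension of the
boundary values `max z.im 0`. On the circle `1 - z ^ 2 = -2 * I * z.im * z`, so the second summand
has real part `z.im * (logCayley z).im / π = |z.im| / 2` there. The divided difference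
`dslope logCayley 0` is `logCayley z / z` with the singularity at `0` removed. -/
def profilePotential (z : ℂ) : ℂ :=
  -I * z / 2 + (1 - z ^ 2) * dslope logCayley 0 z / (2 * π)

theorem profilePotential_of_ne_zero {z : ℂ} (hz : z ≠ 0) :
    profilePotential z = -I * z / 2 + (1 - z ^ 2) * logCayley z / (2 * π * z) := by
  rw [profilePotential, dslope_of_ne _ hz, slope_def_field]
  simp only [logCayley, add_zero, sub_zero, log_one, sub_self]
  field_simp

theorem re_profilePotential_of_norm_eq_one {z : ℂ} (hz : ‖z‖ = 1) :
    (profilePotential z).re = max z.im 0 := by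
  have hz0 : z ≠ 0 := norm_ne_zero_iff.1 (hz ▸ one_ne_zero)
  have hpot : profilePotential z = -I * z / 2 - I * ((z.im / π : ℝ) * logCayley z) := by
    rw [profilePotential_of_ne_zero hz0, one_sub_sq_eq_of_norm_eq_one hz]
    push_cast
    field_simp
    ring
  have hre : (profilePotential z).re = (z.im + |z.im|) / 2 := by
    have him : (I * ((z.im / π : ℝ) * logCayley z)).re = -|z.im| / 2 := by
      rw [I_mul_re, im_ofReal_mul, div_mul_eq_mul_div, im_mul_im_logCayley_of_norm_eq_one hz]
      field_simp
    have hlin : (-I * z / 2).re = z.im / 2 := by simp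
    rw [hpot, sub_re, him, hlin]
    ring
  rw [hre]
  grind

theorem differentiableOn_profilePotential : DifferentiableOn ℂ profilePotential (ball 0 1) := by
  have hlog : DifferentiableOn ℂ logCayley (ball 0 1) := fun z hz ↦ by
    have hadd : 1 + z ∈ slitPlane := mem_slitPlane_of_norm_lt_one (by simpa using hz)
    have hsub : 1 - z ∈ slitPlane := by
      rw [sub_eq_add_neg]
      exact mem_slitPlane_of_norm_lt_one (by simpa using hz)
    exact (hasDerivAt_logCayley hadd hsub).differentiableAt.differentiableWithinAt
  have hslope := (differentiableOn_dslope (ball_mem_nhds 0 one_pos)).2 hlog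
  unfold profilePotential
  fun_prop

theorem continuousAt_mul_clog {z : ℂ} (hz : z ≠ 0 → z ∈ slitPlane) :
    ContinuousAt (fun w : ℂ ↦ w * log w) z := by
  rcases eq_or_ne z 0 with rfl | h0
  · have hbound (w : ℂ) : ‖w * log w‖ ≤ |‖w‖ * Real.log ‖w‖| + ‖w‖ * π := by
      rw [norm_mul, abs_mul, abs_norm, ← mul_add]
      gcongr
      calc ‖log w‖ ≤ |(log w).re| + |(log w).im| := norm_le_abs_re_add_abs_im _
        _ ≤ |Real.log ‖w‖| + π := by
          rw [log_re, log_im]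
          gcongr
          exact abs_arg_le_pi w
    have hlim : Tendsto (fun w : ℂ ↦ |‖w‖ * Real.log ‖w‖| + ‖w‖ * π) (𝓝 0) (𝓝 0) := by
      have hcont : Continuous fun w : ℂ ↦ |‖w‖ * Real.log ‖w‖| + ‖w‖ * π :=
        (Real.continuous_mul_log.comp continuous_norm).abs.add (by fun_prop)
      simpa using hcont.tendsto 0
    rw [ContinuousAt, zero_mul]
    exact squeeze_zero_norm hbound hlim
  · exact continuousAt_id.mul (continuousAt_clog (hz h0))

theorem continuousOn_profilePotential : ContinuousOn profilePotential (closedBall 0 1) := by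
  intro z hz
  rw [mem_closedBall_zero_iff] at hz
  apply ContinuousAt.continuousWithinAt
  rcases eq_or_ne z 0 with rfl | h0
  · exact (differentiableOn_profilePotential.differentiableAt
      (ball_mem_nhds 0 one_pos)).continuousAt
  have hadd : ContinuousAt (fun w ↦ (1 + w) * log (1 + w)) z :=
    (continuousAt_mul_clog fun h ↦ Or.inl (re_pos_of_norm_sub_one_le (by simpa) h)).comp
      (f := fun w ↦ 1 + w) (by fun_prop)
  have hsub : ContinuousAt (fun w ↦ (1 - w) * log (1 - w)) z :=
    (continuousAt_mul_clog fun h ↦ Or.inl (re_pos_of_norm_sub_one_le (by simpa) h)).comp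
      (f := fun w ↦ 1 - w) (by fun_prop)
  have hformula : ContinuousAt (fun w ↦ -I * w / 2 +
      ((1 - w) * ((1 + w) * log (1 + w)) - (1 + w) * ((1 - w) * log (1 - w))) / (2 * π * w)) z := by
    have : (2 * π * z : ℂ) ≠ 0 := by simpa
    fun_prop (disch := assumption)
  refine hformula.congr ?_
  filter_upwards [isOpen_ne.mem_nhds h0] with w hw
  rw [profilePotential_of_ne_zero hw, logCayley]
  ring

theorem hasDerivAt_profilePotential {z : ℂ} (h0 : z ≠ 0) (h₁ : 1 + z ∈ slitPlane)
    (h₂ : 1 - z ∈ slitPlane) :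
    HasDerivAt profilePotential
      (-I / 2 + (1 / z - (1 + z ^ 2) / (2 * z ^ 2) * logCayley z) / π) z := by
  have hsq : HasDerivAt (fun w : ℂ ↦ 1 - w ^ 2) (-(2 * z)) z := by
    simpa using (hasDerivAt_pow 2 z).const_sub 1
  have hlin : HasDerivAt (fun w : ℂ ↦ -I * w / 2) (-I / 2) z := by
    simpa using ((hasDerivAt_id z).const_mul (-I)).div_const 2
  have hden : HasDerivAt (fun w : ℂ ↦ 2 * π * w) (2 * π) z := by
    simpa using (hasDerivAt_id z).const_mul (2 * π : ℂ)
  have hformula := hlin.add ((hsq.mul (hasDerivAt_logCayley h₁ h₂)).div hden (by simpa))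
  have hsq0 : 1 - z ^ 2 ≠ 0 := by
    rw [show 1 - z ^ 2 = (1 + z) * (1 - z) by ring]
    exact mul_ne_zero (slitPlane_ne_zero h₁) (slitPlane_ne_zero h₂)
  refine (hformula.congr_of_eventuallyEq ?_).congr_deriv ?_
  · filter_upwards [isOpen_ne.mem_nhds h0] with w hw using profilePotential_of_ne_zero hw
  · simp only [Pi.mul_apply]
    field_simp
    ring

theorem hasDerivAt_re_profilePotential_radial {z : ℂ} (hz : ‖z‖ = 1) (him : z.im ≠ 0) :
    HasDerivAt (fun s : ℝ ↦ (profilePotential ((1 - s) • z)).re)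
      ((z.re * Real.artanh z.re - 1) / π - z.im / 2) 0 := by
  have h0 : z ≠ 0 := norm_ne_zero_iff.1 (hz ▸ one_ne_zero)
  have hpot := hasDerivAt_profilePotential h0 (Or.inr (by simpa)) (Or.inr (by simpa))
  have hline : HasDerivAt (fun s : ℂ ↦ (1 - s) * z) (-z) ((0 : ℝ) : ℂ) := by
    simpa using ((hasDerivAt_id ((0 : ℝ) : ℂ)).const_sub 1).mul_const z
  have hradial := (hpot.comp_of_eq _ hline (by simp)).real_of_complex
  rw [one_add_sq_eq_of_norm_eq_one hz] at hradial
  have hval : (-I / 2 + (1 / z - 2 * z.re * z / (2 * z ^ 2) * logCayley z) / π) * -z =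
      I * z / 2 + (1 / π : ℝ) * (z.re * logCayley z - 1) := by
    push_cast
    field_simp
    ring
  rw [hval] at hradial
  rw [← re_logCayley_of_norm_eq_one hz him]
  convert hradial using 1
  · simp only [Function.comp_apply, real_smul, ofReal_sub, ofReal_one]
  · rw [add_re, re_ofReal_mul, sub_re, re_ofReal_mul, one_re]
    simp only [div_ofNat_re, mul_re, I_re, zero_mul, I_im, one_mul, zero_sub, one_div]
    ring

theorem HasBallMeans.le_liminf_radial_quotient {w : ℂ → ℝ} (hw : HasBallMeans w (ball 0 1))
    (hwc : ContinuousOn w (closedBall 0 1)) (hle : ∀ y ∈ sphere (0 : ℂ) 1, max y.im 0 ≤ w y)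
    {z : ℂ} (hz : ‖z‖ = 1) (him : z.im < 0) (hnear : ∀ᶠ y in 𝓝[sphere 0 1] z, w y ≤ 0) :
    (z.re * Real.artanh z.re - 1) / π - z.im / 2 ≤
      liminf (fun s : ℝ ↦ w ((1 - s) • z) / s) (𝓝[>] 0) := by
  have hmem : ∀ᶠ s : ℝ in 𝓝[>] 0, 0 < s ∧ (1 - s) • z ∈ closedBall 0 1 := by
    filter_upwards [Ioo_mem_nhdsGT one_pos] with s hs
    refine ⟨hs.1, ?_⟩
    rw [mem_closedBall_zero_iff, norm_smul, hz, mul_one, Real.norm_of_nonneg (by linarith [hs.2])]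
    linarith [hs.1]
  have hlower : ∀ y ∈ closedBall (0 : ℂ) 1, (profilePotential y).re ≤ w y := by
    refine (hasBallMeans_re_of_differentiableOn differentiableOn_profilePotential
      isOpen_ball).le_of_le_sphere hw (continuous_re.comp_continuousOn
        continuousOn_profilePotential) hwc one_ne_zero fun y hy ↦ ?_
    rw [re_profilePotential_of_norm_eq_one (mem_sphere_zero_iff_norm.1 hy)]
    exact hle y hy
  -- If the quotients tended to infinity, their `liminf` in `ℝ` would be the junk value `0`.
  obtain ⟨K, hupper⟩ := hw.exists_le_mul_one_sub_inner hwc hz hnear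
  have hbdd : ∀ᶠ s : ℝ in 𝓝[>] 0, w ((1 - s) • z) / s ≤ K := by
    filter_upwards [hmem] with s ⟨hs, hsz⟩
    have hinner : 1 - ⟪z, (1 - s) • z⟫ = s := by
      rw [real_inner_smul_right, real_inner_self_eq_norm_sq, hz]
      ring
    rw [div_le_iff₀ hs]
    simpa only [hinner] using hupper _ hsz
  have hlim : Tendsto (fun s : ℝ ↦ (profilePotential ((1 - s) • z)).re / s) (𝓝[>] 0)
      (𝓝 ((z.re * Real.artanh z.re - 1) / π - z.im / 2)) := by
    have hzero : (profilePotential z).re = 0 := by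
      rw [re_profilePotential_of_norm_eq_one hz, max_eq_right him.le]
    refine (hasDerivAt_re_profilePotential_radial hz him.ne).tendsto_slope_zero_right.congr
      fun s ↦ ?_
    simp [hzero, div_eq_inv_mul]
  rw [← hlim.liminf_eq]
  refine liminf_le_liminf ?_ hlim.isBoundedUnder_ge
    (isBoundedUnder_of_eventually_le hbdd).isCoboundedUnder_ge
  filter_upwards [hmem] with s ⟨hs, hsz⟩
  exact div_le_div_of_nonneg_right (hlower _ hsz) hs.le

end ProfilePotential

section Artanh

open Real

theorem artanh_eq_log_one_add_sub_log {x y : ℝ} (hxy : x ^ 2 + y ^ 2 = 1) (hy : y ≠ 0) :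
    artanh x = log (1 + x) - log |y| := by
  have hy2 : 0 < y ^ 2 := by positivity
  obtain ⟨hadd, hsub⟩ : 0 < 1 + x ∧ 0 < 1 - x := by constructor <;> nlinarith
  have hratio : (1 + x) / (1 - x) = ((1 + x) / |y|) ^ 2 := by
    rw [div_pow, sq_abs, div_eq_div_iff hsub.ne' hy2.ne']
    linear_combination (1 + x) * hxy
  rw [artanh, hratio, sqrt_sq (by positivity), log_div hadd.ne' (abs_ne_zero.2 hy)]

theorem odd_artanh : Function.Odd artanh := fun x ↦ by
  rw [artanh, artanh, ← log_inv, ← sqrt_inv, inv_div, sub_neg_eq_add, sub_eq_add_neg]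

theorem mul_artanh_eq_abs_mul_artanh_abs (x : ℝ) : x * artanh x = |x| * artanh |x| := by
  rcases abs_choice x with h | h <;> rw [h]
  rw [odd_artanh.eq, neg_mul_neg]

theorem neg_log_abs_div_ten_le_mul_artanh_sub_one {x y : ℝ} (hxy : x ^ 2 + y ^ 2 = 1)
    (hy0 : y ≠ 0) (hy : |y| ≤ 1 / 2) :
    -log |y| / 10 ≤ x * artanh x - 1 := by
  have hx : 43 / 50 ≤ |x| := by
    refine le_of_sq_le_sq ?_ (abs_nonneg x)
    rw [sq_abs]
    nlinarith [sq_abs y, abs_nonneg y]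
  have hlogy : log 2 ≤ -log |y| := by
    rw [← log_inv]
    exact log_le_log two_pos ((le_inv_comm₀ two_pos (abs_pos.2 hy0)).2 (by simpa using hy))
  have hlogx : 61 / 100 ≤ log (1 + |x|) := by
    have hratio : 1 - (93 / 100)⁻¹ ≤ log (93 / 100) := one_sub_inv_le_log_of_pos (by norm_num)
    calc (61 / 100 : ℝ) ≤ log 2 + log (93 / 100) := by linarith [log_two_gt_d9]
      _ = log (93 / 50) := by rw [← log_mul (by norm_num) (by norm_num)]; norm_num
      _ ≤ log (1 + |x|) := log_le_log (by norm_num) (by linarith)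
  rw [mul_artanh_eq_abs_mul_artanh_abs, artanh_eq_log_one_add_sub_log (by rwa [sq_abs]) hy0]
  have hmul : 43 / 50 * (61 / 100 - log |y|) ≤ |x| * (log (1 + |x|) - log |y|) := by
    have : 0 < log 2 := log_pos one_lt_two
    gcongr
    linarith
  linarith [log_two_gt_d9]

end Artanh

theorem HarmonicOn2.le_liminf_radial_quotient {w : E2 → ℝ} (hw : HarmonicOn2 w (ball 0 1))
    (hwc : ContinuousOn w (closedBall 0 1)) (hle : ∀ x ∈ ball (0 : E2) 1, max (x 1) 0 ≤ w x)
    {x₀ : E2} (hx₀ : x₀ ∈ sphere (0 : E2) 1) (hneg : x₀ 1 < 0)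
    (hnear : ∀ᶠ x in 𝓝[sphere 0 1] x₀, w x ≤ 0) :
    (x₀ 0 * Real.artanh (x₀ 0) - 1) / π - x₀ 1 / 2 ≤
      liminf (fun s : ℝ ↦ w ((1 - s) • x₀) / s) (𝓝[>] 0) := by
  let T : ℂ ≃ₗᵢ[ℝ] E2 := Complex.orthonormalBasisOneI.repr
  have hre (z : ℂ) : T z 0 = z.re := by simp [T]
  have him (z : ℂ) : T z 1 = z.im := by simp [T]
  have hsphere : T ⁻¹' sphere 0 1 = sphere 0 1 := by simp
  have hmeans := HasBallMeans.comp_linearIsometryEquiv hw.2 T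
  rw [T.preimage_ball, map_zero] at hmeans
  have hcont : ContinuousOn (w ∘ T) (closedBall 0 1) :=
    hwc.comp T.continuous.continuousOn fun z hz ↦ by simpa using hz
  have hle_closedBall : ∀ x ∈ closedBall (0 : E2) 1, max (x 1) 0 ≤ w x := fun x hx ↦ by
    rw [← closure_ball (0 : E2) one_ne_zero] at hx hwc
    exact le_on_closure hle (by fun_prop) hwc hx
  have hle_circle : ∀ z ∈ sphere (0 : ℂ) 1, max z.im 0 ≤ w (T z) := fun z hz ↦ by
    simpa only [him] using hle_closedBall (T z) (by simpa using hz.le)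
  obtain ⟨z, rfl⟩ := T.surjective x₀
  have hnear_comp : ∀ᶠ y in 𝓝[sphere 0 1] z, w (T y) ≤ 0 := by
    rw [← hsphere]
    exact hnear.filter_mono (T.continuous.continuousWithinAt.tendsto_nhdsWithin
      (mapsTo_preimage T _))
  simpa only [hre, him, Function.comp_apply, map_smul] using
    hmeans.le_liminf_radial_quotient hcont hle_circle
      (by simpa using hx₀) (by simpa only [him] using hneg) hnear_comp

theorem stmt_6_general :
    ∃ C : ℝ, 0 < C ∧
      ∀ δ < (1 / 2 : ℝ),
      ∀ w : E2 → ℝ,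
        ContinuousOn w (closedBall (0 : E2) 1) →
        HarmonicOn2 w (ball (0 : E2) 1) →
        (∀ x ∈ ball (0 : E2) 1, max (x 1) 0 ≤ w x) →
        ∀ x₀ ∈ sphere (0 : E2) 1, -δ < x₀ 1 → x₀ 1 < 0 →
        (∀ᶠ x in 𝓝[sphere 0 1] x₀, w x ≤ 0) →
          C * Real.log (1 / δ) ≤
            liminf (fun s : ℝ => w ((1 - s) • x₀) / s) (𝓝[>] 0) := by
  refine ⟨1 / (10 * π), by positivity, fun δ hδ w hwc hw hle x₀ hx₀ hδx hneg hnear ↦ ?_⟩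
  refine le_trans ?_ (hw.le_liminf_radial_quotient hwc hle hx₀ hneg hnear)
  have hcoord : x₀ 0 ^ 2 + x₀ 1 ^ 2 = 1 := by
    simpa [EuclideanSpace.norm_eq] using hx₀
  have habs : |x₀ 1| < δ := abs_lt.2 ⟨hδx, by linarith⟩
  have hbound := neg_log_abs_div_ten_le_mul_artanh_sub_one hcoord hneg.ne (habs.trans hδ).le
  have hlog : Real.log (1 / δ) ≤ -Real.log |x₀ 1| := by
    rw [one_div, Real.log_inv, neg_le_neg_iff]
    exact Real.log_le_log (abs_pos.2 hneg.ne) habs.le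
  calc 1 / (10 * π) * Real.log (1 / δ)
      ≤ 1 / (10 * π) * -Real.log |x₀ 1| := by gcongr
    _ = -Real.log |x₀ 1| / 10 / π := by field_simp
    _ ≤ (x₀ 0 * Real.artanh (x₀ 0) - 1) / π := by gcongr
    _ ≤ (x₀ 0 * Real.artanh (x₀ 0) - 1) / π - x₀ 1 / 2 := by linarith

/-- Logarithmic blow-up of the inward normal derivative for a harmonic function dominating
the half-plane profile `x ↦ max ⟨x, e₂⟩ 0` and vanishing on the lower part of the unit circle. -/
theorem stmt_6 :
    ∃ C : ℝ, 0 < C ∧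
      ∀ δ : ℝ, 0 < δ → δ < 1 / 2 →
      ∀ w : E2 → ℝ,
        ContinuousOn w (closedBall (0 : E2) 1) →
        (∀ x ∈ closedBall (0 : E2) 1, 0 ≤ w x) →
        HarmonicOn2 w (ball (0 : E2) 1) →
        (∀ x ∈ ball (0 : E2) 1, max (x 1) 0 ≤ w x) →
        (∀ x ∈ sphere (0 : E2) 1, x 1 < 0 → w x = 0) →
        ∀ x₀ ∈ sphere (0 : E2) 1, -δ < x₀ 1 → x₀ 1 < 0 →
          C * Real.log (1 / δ) ≤
            Filter.liminf (fun s : ℝ => w ((1 - s) • x₀) / s) (nhdsWithin 0 (Set.Ioi 0)) := by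
  obtain ⟨C, hC, hbound⟩ := stmt_6_general
  refine ⟨C, hC, fun δ _ hδ w hwc _ hw hle hzero x₀ hx₀ hδx hneg ↦
    hbound δ hδ w hwc hw hle x₀ hx₀ hδx hneg ?_⟩
  filter_upwards [self_mem_nhdsWithin, mem_nhdsWithin_of_mem_nhds
    ((isOpen_Iio.preimage (by fun_prop : Continuous fun x : E2 ↦ x 1)).mem_nhds hneg)] with x hx hx1
  exact (hzero x hx hx1).le
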